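/- Let K : ℝ → ℝ be differentiable with |K'(x)| ≤ B for all x, let ε > 0, and let K_ε(x) := ε⁻¹ K(x/ε). Let F : ℝ → ℝ be Lipschitz with constant L. Let μ and ν be probability measures on ℝ and let γ be a coupling of μ and ν (a probability measure on ℝ × ℝ with marginals μ and ν) such that (y, y') ↦ |y − y'| is γ-integrable. Then for every x ∈ ℝ: |F((K_ε ∗ μ)(x)) − F((K_ε ∗ ν)(x))| ≤ L·ε⁻²·B·∫_{ℝ×ℝ} |y − y'| dγ(y, y'). -/

import Mathlib

open MeasureTheory

open scoped NNReal

theorem norm_integral_sub_integral_le {α G : Type*} [MeasurableSpace α] [NormedAddCommGroup G]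
    [NormedSpace ℝ G] {μ : Measure α} {f g : α → G} (hfg : Integrable (fun a ↦ f a - g a) μ) :
    ‖∫ a, f a ∂μ - ∫ a, g a ∂μ‖ ≤ ∫ a, ‖f a - g a‖ ∂μ := by
  have integrable_iff : Integrable f μ ↔ Integrable g μ := by
    simpa only [sub_add_cancel] using integrable_add_iff_integrable_right' (g := g) hfg
  by_cases hg : Integrable g μ
  · rw [← integral_sub (integrable_iff.mpr hg) hg]
    exact norm_integral_le_integral_norm _
  · -- Neither function is integrable, so both integrals take the default value `0`.
    rw [integral_undef hg, integral_undef (mt integrable_iff.mp hg), sub_self, norm_zero]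
    positivity

section Coupling

variable {X G : Type*} [PseudoMetricSpace X] [MeasurableSpace X] [OpensMeasurableSpace X]
  [NormedAddCommGroup G] [SecondCountableTopologyEither X G] {C : ℝ≥0} {f : X → G}
  {γ : Measure (X × X)}

theorem integrable_sub_of_lipschitzWith (hf : LipschitzWith C f)
    (hγ : Integrable (fun p ↦ dist p.1 p.2) γ) : Integrable (fun p ↦ f p.1 - f p.2) γ := by
  have hf_meas : StronglyMeasurable f := hf.continuous.stronglyMeasurable
  have hsub_meas : StronglyMeasurable fun p : X × X ↦ f p.1 - f p.2 :=
    (hf_meas.comp_measurable measurable_fst).sub (hf_meas.comp_measurable measurable_snd)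
  refine (hγ.const_mul C).mono' hsub_meas.aestronglyMeasurable (.of_forall fun p ↦ ?_)
  simpa only [dist_eq_norm] using hf.dist_le_mul p.1 p.2

theorem norm_integral_fst_sub_integral_snd_le [NormedSpace ℝ G] (hf : LipschitzWith C f)
    (hγ : Integrable (fun p ↦ dist p.1 p.2) γ) :
    ‖∫ x, f x ∂γ.fst - ∫ x, f x ∂γ.snd‖ ≤ C * ∫ p, dist p.1 p.2 ∂γ := by
  have hf_meas : StronglyMeasurable f := hf.continuous.stronglyMeasurable
  have hsub : Integrable (fun p ↦ f p.1 - f p.2) γ := integrable_sub_of_lipschitzWith hf hγ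
  calc ‖∫ x, f x ∂γ.fst - ∫ x, f x ∂γ.snd‖
      = ‖∫ p, f p.1 ∂γ - ∫ p, f p.2 ∂γ‖ := by
        rw [Measure.fst, Measure.snd,
          integral_map measurable_fst.aemeasurable hf_meas.aestronglyMeasurable,
          integral_map measurable_snd.aemeasurable hf_meas.aestronglyMeasurable]
    _ ≤ ∫ p, ‖f p.1 - f p.2‖ ∂γ := norm_integral_sub_integral_le hsub
    _ ≤ ∫ p, C * dist p.1 p.2 ∂γ :=
        integral_mono hsub.norm (hγ.const_mul C) fun p ↦ by
          simpa only [dist_eq_norm] using hf.dist_le_mul p.1 p.2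
    _ = C * ∫ p, dist p.1 p.2 ∂γ := integral_const_mul _ _

end Coupling

section Mollification

variable {E : Type*} [NormedAddCommGroup E] [NormedSpace ℝ E]

/-- The scaled kernel `K_ε(x) = ε⁻ⁿ K(x / ε)`. The exponent `n` is a parameter; mass is preserved
when it is the dimension of `E`. -/
noncomputable def scaledKernel (K : E → ℝ) (n : ℕ) (ε : ℝ) (x : E) : ℝ :=
  ε⁻¹ ^ n * K (ε⁻¹ • x)

/-- The mollified density `K_ε ∗ μ` of a measure `μ`, as a function of the point `x`; by the
convention for Bochner integrals it is `0` where `y ↦ K_ε(x - y)` is not `μ`-integrable. -/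
noncomputable def mollifiedDensity (K : E → ℝ) (n : ℕ) (ε : ℝ) [MeasurableSpace E] (μ : Measure E)
    (x : E) : ℝ :=
  ∫ y, scaledKernel K n ε (x - y) ∂μ

theorem lipschitzWith_scaledKernel {K : E → ℝ} {B : ℝ≥0} (hK : LipschitzWith B K) (n : ℕ) (ε : ℝ) :
    LipschitzWith (‖ε⁻¹‖₊ ^ (n + 1) * B) (scaledKernel K n ε) := by
  have hcomp : LipschitzWith (‖ε⁻¹ ^ n‖₊ * (B * ‖ε⁻¹‖₊)) (scaledKernel K n ε) :=
    (lipschitzWith_smul (ε⁻¹ ^ n)).comp (hK.comp (lipschitzWith_smul ε⁻¹))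
  refine hcomp.weaken (le_of_eq ?_)
  rw [nnnorm_pow]
  ring

variable [MeasurableSpace E] [OpensMeasurableSpace E]

theorem dist_mollifiedDensity_le {K : E → ℝ} {B : ℝ≥0} (hK : LipschitzWith B K) (n : ℕ) (ε : ℝ)
    {γ : Measure (E × E)} (hγ : Integrable (fun p ↦ dist p.1 p.2) γ) (x : E) :
    dist (mollifiedDensity K n ε γ.fst x) (mollifiedDensity K n ε γ.snd x)
      ≤ |ε⁻¹| ^ (n + 1) * B * ∫ p, dist p.1 p.2 ∂γ := by
  have hlip : LipschitzWith (‖ε⁻¹‖₊ ^ (n + 1) * B) fun y ↦ scaledKernel K n ε (x - y) := by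
    simpa only [mul_one] using! (lipschitzWith_scaledKernel hK n ε).comp
      (IsometryEquiv.subLeft x).isometry.lipschitz
  exact norm_integral_fst_sub_integral_snd_le hlip hγ

theorem regularized_volatility_lipschitz_in_measure_general {H : Type*} [PseudoMetricSpace H]
    {K : E → ℝ} {B : ℝ≥0} (hK : LipschitzWith B K) (n : ℕ) {ε : ℝ} (hε : 0 < ε) {F : ℝ → H}
    {L : ℝ≥0} (hF : LipschitzWith L F) {μ ν : Measure E} {γ : Measure (E × E)}
    (hμ : γ.fst = μ) (hν : γ.snd = ν) (hγ : Integrable (fun p ↦ dist p.1 p.2) γ) (x : E) :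
    dist (F (mollifiedDensity K n ε μ x)) (F (mollifiedDensity K n ε ν x))
      ≤ L * ε⁻¹ ^ (n + 1) * B * ∫ p, dist p.1 p.2 ∂γ := by
  subst hμ hν
  calc dist (F (mollifiedDensity K n ε γ.fst x)) (F (mollifiedDensity K n ε γ.snd x))
      ≤ L * dist (mollifiedDensity K n ε γ.fst x) (mollifiedDensity K n ε γ.snd x) :=
        hF.dist_le_mul _ _
    _ ≤ L * (|ε⁻¹| ^ (n + 1) * B * ∫ p, dist p.1 p.2 ∂γ) := by
        gcongr
        exact dist_mollifiedDensity_le hK n ε hγ x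
    _ = L * ε⁻¹ ^ (n + 1) * B * ∫ p, dist p.1 p.2 ∂γ := by
        rw [abs_of_pos (inv_pos.mpr hε)]
        ring

end Mollification

/-- Lipschitz-in-measure estimate for the regularized volatility (Proposition 2.6): composing a
Lipschitz function `F` with the mollified density, the difference at a point is bounded by
`L ε⁻² B` times the transport cost of any coupling `γ` of `μ` and `ν`. -/
theorem regularized_volatility_lipschitz_in_measure (K : ℝ → ℝ)
    (hdiff : Differentiable ℝ K) (B : ℝ) (hB : ∀ x : ℝ, |deriv K x| ≤ B)
    (ε : ℝ) (hε : 0 < ε) (F : ℝ → ℝ) (L : ℝ)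
    (hF : ∀ v₁ v₂ : ℝ, |F v₁ - F v₂| ≤ L * |v₁ - v₂|)
    (μ ν : Measure ℝ) [IsProbabilityMeasure μ] [IsProbabilityMeasure ν]
    (γ : Measure (ℝ × ℝ)) [IsProbabilityMeasure γ]
    (hγ1 : γ.map Prod.fst = μ) (hγ2 : γ.map Prod.snd = ν)
    (hint : Integrable (fun p : ℝ × ℝ => |p.1 - p.2|) γ) :
    ∀ x : ℝ,
      |F (∫ y, ε⁻¹ * K ((x - y) / ε) ∂μ) - F (∫ y, ε⁻¹ * K ((x - y) / ε) ∂ν)|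
        ≤ L * ε⁻¹ ^ 2 * B * ∫ p : ℝ × ℝ, |p.1 - p.2| ∂γ := by
  lift B to ℝ≥0 using (abs_nonneg _).trans (hB 0)
  lift L to ℝ≥0 using by simpa using (abs_nonneg _).trans (hF 1 0)
  simpa [mollifiedDensity, scaledKernel, div_eq_inv_mul, Real.dist_eq] using
    regularized_volatility_lipschitz_in_measure_general (lipschitzWith_of_nnnorm_deriv_le hdiff hB)
      1 hε (LipschitzWith.of_dist_le_mul (f := F) hF) hγ1 hγ2 hint
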